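/- Measurement compatibility for balanced two-mode displaced squeezed probes: in the two-mode noisy interferometry setting with general input displacement d₀ = √2·(α₁, α₂, β₁, β₂)ᵀ satisfying α₁² + α₂² = β₁² + β₂², for any symmetric matrices L_φ, L_x, L_y with V L_ζ V + Ω L_ζ Ω = ∂_ζ V (ζ ∈ {φ, x, y}), the quantity 𝒥_{ηζ} := 2·tr( Ω L_ζ V L_η ) + 2·(∂_η d)ᵀ V⁻¹ Ω V⁻¹ (∂_ζ d) vanishes for all pairs η, ζ ∈ {φ, x, y}. -/

import Mathlib

open Matrix

noncomputable section

/-- The standard symplectic form on two modes (4×4). -/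
def Omega4 : Matrix (Fin 4) (Fin 4) ℝ :=
  !![0, 1, 0, 0; -1, 0, 0, 0; 0, 0, 0, 1; 0, 0, -1, 0]

/-- Covariance matrix of the two-mode squeezed input with squeezing parameter `r`. -/
def V0 (r : ℝ) : Matrix (Fin 4) (Fin 4) ℝ :=
  !![Real.cosh (2*r), 0, Real.sinh (2*r), 0;
     0, Real.cosh (2*r), 0, -Real.sinh (2*r);
     Real.sinh (2*r), 0, Real.cosh (2*r), 0;
     0, -Real.sinh (2*r), 0, Real.cosh (2*r)]

/-- General input displacement `√2·(α₁, α₂, β₁, β₂)ᵀ`. -/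
def d0g (α₁ α₂ β₁ β₂ : ℝ) : Fin 4 → ℝ :=
  Real.sqrt 2 • ![α₁, α₂, β₁, β₂]

/-- Phase rotations by `±φ/2` on the two modes. -/
def Sphase (φ : ℝ) : Matrix (Fin 4) (Fin 4) ℝ :=
  !![Real.cos (φ/2), Real.sin (φ/2), 0, 0;
     -Real.sin (φ/2), Real.cos (φ/2), 0, 0;
     0, 0, Real.cos (φ/2), -Real.sin (φ/2);
     0, 0, Real.sin (φ/2), Real.cos (φ/2)]

/-- Evolved covariance matrix `x·S_φ V₀ S_φᵀ + y·𝟙₄`. -/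
def Vm (r φ x y : ℝ) : Matrix (Fin 4) (Fin 4) ℝ :=
  x • (Sphase φ * V0 r * (Sphase φ)ᵀ) + y • (1 : Matrix (Fin 4) (Fin 4) ℝ)

/-- Evolved displacement `√x·S_φ d₀`. -/
def dmg (α₁ α₂ β₁ β₂ φ x : ℝ) : Fin 4 → ℝ :=
  Real.sqrt x • (Sphase φ).mulVec (d0g α₁ α₂ β₁ β₂)

/-- Entrywise partial derivative of `Vm` with respect to `φ`. -/
def dVdphi (r φ x y : ℝ) : Matrix (Fin 4) (Fin 4) ℝ :=
  Matrix.of fun i j => deriv (fun t => Vm r t x y i j) φ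

/-- Entrywise partial derivative of `Vm` with respect to `x`. -/
def dVdx (r φ x y : ℝ) : Matrix (Fin 4) (Fin 4) ℝ :=
  Matrix.of fun i j => deriv (fun t => Vm r φ t y i j) x

/-- Entrywise partial derivative of `Vm` with respect to `y`. -/
def dVdy (r φ x y : ℝ) : Matrix (Fin 4) (Fin 4) ℝ :=
  Matrix.of fun i j => deriv (fun t => Vm r φ x t i j) y

/-- Entrywise partial derivative of `dmg` with respect to `φ`. -/
def ddgphi (α₁ α₂ β₁ β₂ φ x : ℝ) : Fin 4 → ℝ :=
  fun i => deriv (fun t => dmg α₁ α₂ β₁ β₂ t x i) φ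

/-- Entrywise partial derivative of `dmg` with respect to `x`. -/
def ddgx (α₁ α₂ β₁ β₂ φ x : ℝ) : Fin 4 → ℝ :=
  fun i => deriv (fun t => dmg α₁ α₂ β₁ β₂ φ t i) x

/-- Entrywise partial derivative of `dmg` with respect to `y` (the displacement does
not depend on `y`). -/
def ddgy (α₁ α₂ β₁ β₂ φ x y : ℝ) : Fin 4 → ℝ :=
  fun i => deriv (fun _t : ℝ => dmg α₁ α₂ β₁ β₂ φ x i) y

/-- The commutative algebra `a + b K`. -/
def Vab (a b : ℝ) : Matrix (Fin 4) (Fin 4) ℝ :=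
  !![a, 0, b, 0; 0, a, 0, -b; b, 0, a, 0; 0, -b, 0, a]

lemma S_comm (φ a b : ℝ) : Sphase φ * Vab a b = Vab a b * Sphase φ := by
  ext i j
  fin_cases i <;> fin_cases j <;> simp [Vab, Sphase, Matrix.mul_apply, Fin.sum_univ_four, mul_comm]

lemma S_orth (φ : ℝ) : Sphase φ * (Sphase φ)ᵀ = 1 := by
  have h := Real.sin_sq_add_cos_sq (φ/2)
  ext i j
  rw [Matrix.mul_apply, Fin.sum_univ_four]
  simp only [Matrix.transpose_apply]
  fin_cases i <;> fin_cases j <;> simp [Sphase] <;> linarith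

lemma Vm_eq (r φ x y : ℝ) :
    Vm r φ x y = Vab (x * Real.cosh (2*r) + y) (x * Real.sinh (2*r)) := by
  rw [Vm, show V0 r = Vab (Real.cosh (2*r)) (Real.sinh (2*r)) from rfl, S_comm, Matrix.mul_assoc,
    S_orth, Matrix.mul_one]
  ext i j
  fin_cases i <;> fin_cases j <;> simp [Vab]

lemma dVdphi_eq (r φ x y : ℝ) : dVdphi r φ x y = Vab 0 0 := by
  ext i j
  simp only [dVdphi, Vm_eq, Matrix.of_apply, deriv_const]
  fin_cases i <;> fin_cases j <;> simp [Vab]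

lemma dVdx_eq (r φ x y : ℝ) :
    dVdx r φ x y = Vab (Real.cosh (2*r)) (Real.sinh (2*r)) := by
  ext i j
  simp only [dVdx, Vm_eq, Matrix.of_apply]
  fin_cases i <;> fin_cases j <;> simp [Vab]

lemma dVdy_eq (r φ x y : ℝ) : dVdy r φ x y = Vab 1 0 := by
  ext i j
  simp only [dVdy, Vm_eq, Matrix.of_apply]
  fin_cases i <;> fin_cases j <;> simp [Vab]

lemma Vab_mul (a b c d : ℝ) : Vab a b * Vab c d = Vab (a*c+b*d) (a*d+b*c) := by
  ext i j
  fin_cases i <;> fin_cases j <;> simp [Vab, Matrix.mul_apply, Fin.sum_univ_four] <;> ring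

lemma Om_Vab (a b : ℝ) : Omega4 * Vab a b = Vab a (-b) * Omega4 := by
  ext i j
  fin_cases i <;> fin_cases j <;> simp [Vab, Omega4, Matrix.mul_apply, Fin.sum_univ_four]

lemma Om_sq : Omega4 * Omega4 = -1 := by
  ext i j
  fin_cases i <;> fin_cases j <;> simp [Omega4, Matrix.mul_apply, Fin.sum_univ_four]

lemma Vab_scal (a : ℝ) : Vab a 0 = a • (1 : Matrix (Fin 4) (Fin 4) ℝ) := by
  ext i j
  fin_cases i <;> fin_cases j <;> simp [Vab, Matrix.one_apply]

lemma VOV (a b : ℝ) : Vab a b * Omega4 * Vab a b = (a^2-b^2) • Omega4 := by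
  rw [Matrix.mul_assoc, Om_Vab, ← Matrix.mul_assoc, Vab_mul]
  rw [show a * -b + b * a = 0 by ring, Vab_scal, show a*a+b * -b = a^2-b^2 by ring]
  simp

lemma uniq (a b : ℝ) (h : 1 < a^2 - b^2) (L : Matrix (Fin 4) (Fin 4) ℝ)
    (hL : Vab a b * L * Vab a b + Omega4 * L * Omega4 = 0) : L = 0 := by
  have e1 : Vab a b * Omega4 * (Vab a b * L * Vab a b + Omega4 * L * Omega4) *
      (Omega4 * Vab a b) = ((a^2-b^2)^2) • (Omega4 * L * Omega4) + Vab a b * L * Vab a b := by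
    have : Vab a b * Omega4 * (Vab a b * L * Vab a b + Omega4 * L * Omega4) *
      (Omega4 * Vab a b) = (Vab a b * Omega4 * Vab a b) * L * (Vab a b * Omega4 * Vab a b)
        + Vab a b * (Omega4 * Omega4) * L * (Omega4 * Omega4) * Vab a b := by
      noncomm_ring
    rw [this, VOV, Om_sq]
    simp [smul_smul, sq]
  rw [hL] at e1
  have e2 : ((a^2-b^2)^2 - 1) • (Omega4 * L * Omega4) = 0 := by
    have e3 : Vab a b * L * Vab a b = - (Omega4 * L * Omega4) := eq_neg_of_add_eq_zero_left hL
    rw [e3] at e1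
    rw [sub_smul, one_smul, sub_eq_add_neg, ← e1]; simp
  have e4 : Omega4 * L * Omega4 = 0 := by
    rcases smul_eq_zero.1 e2 with h0 | h0
    · nlinarith
    · exact h0
  have : L = (Omega4 * Omega4) * L * (Omega4 * Omega4) := by simp [Om_sq]
  rw [this, show (Omega4 * Omega4) * L * (Omega4 * Omega4) = Omega4 * (Omega4 * L * Omega4) * Omega4
    by noncomm_ring, e4]
  simp

lemma Vab_sub (a b c d : ℝ) : Vab a b - Vab c d = Vab (a-c) (b-d) := by
  ext i j
  fin_cases i <;> fin_cases j <;> simp [Vab]; all_goals ring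

lemma OVO (a b : ℝ) : Omega4 * Vab a b * Omega4 = Vab (-a) b := by
  rw [Om_Vab, Matrix.mul_assoc, Om_sq]
  ext i j
  fin_cases i <;> fin_cases j <;> simp [Vab]

lemma Vab_add (a b c d : ℝ) : Vab a b + Vab c d = Vab (a+c) (b+d) := by
  ext i j
  fin_cases i <;> fin_cases j <;> simp [Vab]; all_goals ring

lemma solve (a b p q : ℝ) (h : 1 < a^2 - b^2) (L : Matrix (Fin 4) (Fin 4) ℝ)
    (hL : Vab a b * L * Vab a b + Omega4 * L * Omega4 = Vab p q) : ∃ u v, L = Vab u v := by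
  have hD : (a^2+b^2)^2 - 1 - 4*a^2*b^2 ≠ 0 := by
    have : (a^2+b^2)^2 - 1 - 4*a^2*b^2 = (a^2-b^2)^2 - 1 := by ring
    rw [this]; nlinarith
  obtain ⟨D, hDD⟩ : ∃ D, D = (a^2+b^2)^2 - 1 - 4*a^2*b^2 := ⟨_, rfl⟩
  rw [← hDD] at hD
  refine ⟨((a^2+b^2+1)*p - 2*a*b*q)/D, ((a^2+b^2-1)*q - 2*a*b*p)/D, ?_⟩
  rw [← sub_eq_zero]
  apply uniq a b h
  have : ∀ M : Matrix (Fin 4) (Fin 4) ℝ, Vab a b * (L - M) * Vab a b + Omega4 * (L - M) * Omega4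
    = (Vab a b * L * Vab a b + Omega4 * L * Omega4) -
      (Vab a b * M * Vab a b + Omega4 * M * Omega4) := by
    intro M; noncomm_ring
  rw [this, hL, OVO, Vab_mul, Vab_mul, Vab_add, sub_eq_zero]
  congr 1 <;> field_simp <;> rw [hDD] <;> ring

lemma tr0 (a b c d e f : ℝ) : (Omega4 * Vab a b * Vab c d * Vab e f).trace = 0 := by
  rw [Matrix.mul_assoc, Matrix.mul_assoc, Vab_mul, Vab_mul]
  simp [Matrix.trace, Fin.sum_univ_four, Omega4, Vab, Matrix.mul_apply]

lemma inv_form (a b : ℝ) (h : 1 < a^2 - b^2) :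
    (Vab a b)⁻¹ * Omega4 * (Vab a b)⁻¹ = (a^2-b^2)⁻¹ • Omega4 := by
  have h0 : a^2 - b^2 ≠ 0 := by linarith
  have hinv : Vab a b * Vab (a/(a^2-b^2)) (-b/(a^2-b^2)) = 1 := by
    rw [Vab_mul]
    rw [show a * (-b/(a^2-b^2)) + b*(a/(a^2-b^2)) = 0 by ring, Vab_scal,
      show a * (a/(a^2-b^2)) + b*(-b/(a^2-b^2)) = 1 by field_simp; ring]
    simp
  rw [Matrix.inv_eq_right_inv hinv, VOV]
  congr 1
  field_simp

lemma ddgphi_eq (α₁ α₂ β₁ β₂ φ x : ℝ) : ddgphi α₁ α₂ β₁ β₂ φ x =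
    (Real.sqrt x * Real.sqrt 2 / 2) • ![-Real.sin (φ/2) * α₁ + Real.cos (φ/2) * α₂,
      -Real.cos (φ/2) * α₁ - Real.sin (φ/2) * α₂,
      -Real.sin (φ/2) * β₁ - Real.cos (φ/2) * β₂,
      Real.cos (φ/2) * β₁ - Real.sin (φ/2) * β₂] := by
  have hs : HasDerivAt (fun t : ℝ => Real.sin (t/2)) (Real.cos (φ/2) * (1/2)) φ :=
    ((hasDerivAt_id φ).div_const 2).sin
  have hc : HasDerivAt (fun t : ℝ => Real.cos (t/2)) (-Real.sin (φ/2) * (1/2)) φ :=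
    ((hasDerivAt_id φ).div_const 2).cos
  have key : ∀ k l m : ℝ, deriv (fun t : ℝ => k * (Real.cos (t/2) * l + Real.sin (t/2) * m)) φ
      = k * (-Real.sin (φ/2) * (1/2) * l + Real.cos (φ/2) * (1/2) * m) := fun k l m =>
    (((hc.mul_const l).add (hs.mul_const m)).const_mul k).deriv
  ext i
  fin_cases i
  · refine Eq.trans ?_ ((key (Real.sqrt x * Real.sqrt 2) α₁ α₂).trans ?_)
    · simp only [ddgphi]; congr 1; funext t
      simp [dmg, d0g, Sphase, Matrix.mulVec, dotProduct, Fin.sum_univ_four]; ring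
    · simp; ring
  · refine Eq.trans ?_ ((key (Real.sqrt x * Real.sqrt 2) α₂ (-α₁)).trans ?_)
    · simp only [ddgphi]; congr 1; funext t
      simp [dmg, d0g, Sphase, Matrix.mulVec, dotProduct, Fin.sum_univ_four]; ring
    · simp; ring
  · refine Eq.trans ?_ ((key (Real.sqrt x * Real.sqrt 2) β₁ (-β₂)).trans ?_)
    · simp only [ddgphi]; congr 1; funext t
      simp [dmg, d0g, Sphase, Matrix.mulVec, dotProduct, Fin.sum_univ_four]; ring
    · simp; ring
  · refine Eq.trans ?_ ((key (Real.sqrt x * Real.sqrt 2) β₂ β₁).trans ?_)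
    · simp only [ddgphi]; congr 1; funext t
      simp [dmg, d0g, Sphase, Matrix.mulVec, dotProduct, Fin.sum_univ_four]; ring
    · simp; ring

lemma ddgx_eq (α₁ α₂ β₁ β₂ φ x : ℝ) (hx : 0 < x) : ddgx α₁ α₂ β₁ β₂ φ x =
    (1 / (2 * Real.sqrt x)) • (Sphase φ).mulVec (d0g α₁ α₂ β₁ β₂) := by
  ext i
  exact ((Real.hasDerivAt_sqrt hx.ne').mul_const _).deriv

lemma ddgy_eq (α₁ α₂ β₁ β₂ φ x y : ℝ) : ddgy α₁ α₂ β₁ β₂ φ x y = 0 := by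
  ext i
  simp [ddgy]

lemma Om_self (v : Fin 4 → ℝ) : v ⬝ᵥ Omega4.mulVec v = 0 := by
  simp [Omega4, Matrix.mulVec, dotProduct, Fin.sum_univ_four]; ring

lemma Om_anti (v w : Fin 4 → ℝ) : v ⬝ᵥ Omega4.mulVec w = - (w ⬝ᵥ Omega4.mulVec v) := by
  simp [Omega4, Matrix.mulVec, dotProduct, Fin.sum_univ_four]; ring

lemma Om_phix (α₁ α₂ β₁ β₂ φ x : ℝ) (hx : 0 < x) (hbal : α₁^2 + α₂^2 = β₁^2 + β₂^2) :
    ddgphi α₁ α₂ β₁ β₂ φ x ⬝ᵥ Omega4.mulVec (ddgx α₁ α₂ β₁ β₂ φ x) = 0 := by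
  rw [ddgphi_eq, ddgx_eq _ _ _ _ _ _ hx, Matrix.mulVec_smul, smul_dotProduct, dotProduct_smul]
  have h := Real.sin_sq_add_cos_sq (φ/2)
  have : ![-Real.sin (φ/2) * α₁ + Real.cos (φ/2) * α₂,
      -Real.cos (φ/2) * α₁ - Real.sin (φ/2) * α₂,
      -Real.sin (φ/2) * β₁ - Real.cos (φ/2) * β₂,
      Real.cos (φ/2) * β₁ - Real.sin (φ/2) * β₂] ⬝ᵥ
      Omega4.mulVec ((Sphase φ).mulVec (d0g α₁ α₂ β₁ β₂)) = 0 := by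
    simp [Omega4, Sphase, d0g, Matrix.mulVec, dotProduct, Fin.sum_univ_four]
    linear_combination (Real.sqrt 2 * (Real.sin (φ/2)^2 + Real.cos (φ/2)^2)) * hbal
  rw [this]; simp

theorem measurement_compatibility_balanced (r φ x y α₁ α₂ β₁ β₂ : ℝ)
    (hr : 0 ≤ r) (hx : 0 < x) (hy : |1 - x| < y)
    (hbal : α₁^2 + α₂^2 = β₁^2 + β₂^2)
    (Lφ Lx Ly : Matrix (Fin 4) (Fin 4) ℝ)
    (hLφs : Lφ.IsSymm) (hLxs : Lx.IsSymm) (hLys : Ly.IsSymm)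
    (hLφ : Vm r φ x y * Lφ * Vm r φ x y + Omega4 * Lφ * Omega4 = dVdphi r φ x y)
    (hLx : Vm r φ x y * Lx * Vm r φ x y + Omega4 * Lx * Omega4 = dVdx r φ x y)
    (hLy : Vm r φ x y * Ly * Vm r φ x y + Omega4 * Ly * Omega4 = dVdy r φ x y) :
    ∀ η ζ : Fin 3,
      2 * (Omega4 * ![Lφ, Lx, Ly] ζ * Vm r φ x y * ![Lφ, Lx, Ly] η).trace
        + 2 * (![ddgphi α₁ α₂ β₁ β₂ φ x, ddgx α₁ α₂ β₁ β₂ φ x,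
                  ddgy α₁ α₂ β₁ β₂ φ x y] η ⬝ᵥ
            ((Vm r φ x y)⁻¹ * Omega4 * (Vm r φ x y)⁻¹).mulVec
              (![ddgphi α₁ α₂ β₁ β₂ φ x, ddgx α₁ α₂ β₁ β₂ φ x,
                  ddgy α₁ α₂ β₁ β₂ φ x y] ζ)) = 0 := by
  have hpos : 1 < (x * Real.cosh (2*r) + y)^2 - (x * Real.sinh (2*r))^2 := by
    have h1 := Real.cosh_sq (2*r)
    have h2 := Real.one_le_cosh (2*r)
    have h3 : 0 < y := lt_of_le_of_lt (abs_nonneg _) hy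
    have h4 : 1 < x + y := by have := (abs_lt.1 hy).2; linarith
    have h5 : 0 ≤ x * y * (Real.cosh (2*r) - 1) :=
      mul_nonneg (mul_pos hx h3).le (by linarith)
    have h6 : (x * Real.cosh (2*r) + y)^2 - (x * Real.sinh (2*r))^2
      = (x+y)^2 + 2 * (x * y * (Real.cosh (2*r) - 1)) := by
      linear_combination x^2 * h1
    rw [h6]; nlinarith
  rw [dVdphi_eq] at hLφ
  rw [dVdx_eq] at hLx
  rw [dVdy_eq] at hLy
  rw [Vm_eq] at hLφ hLx hLy ⊢
  obtain ⟨u1, v1, rfl⟩ := solve _ _ _ _ hpos _ hLφ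
  obtain ⟨u2, v2, rfl⟩ := solve _ _ _ _ hpos _ hLx
  obtain ⟨u3, v3, rfl⟩ := solve _ _ _ _ hpos _ hLy
  rw [inv_form _ _ hpos]
  have hp := Om_phix α₁ α₂ β₁ β₂ φ x hx hbal
  have hp' : ddgx α₁ α₂ β₁ β₂ φ x ⬝ᵥ Omega4.mulVec (ddgphi α₁ α₂ β₁ β₂ φ x) = 0 := by
    rw [Om_anti, hp, neg_zero]
  intro η ζ
  fin_cases η <;> fin_cases ζ <;>
    simp [tr0, Matrix.smul_mulVec, Om_self, hp, hp', ddgy_eq]
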